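/- Let p = p(n) ∈ [0,1] be such that limsup_{n→∞} p(n) < 1/2. Then asymptotically almost surely, every orientation of the binomial random graph G(n,p) contains a Sullivan vertex. -/

import Mathlib

open Filter

/-- The outneighbourhood `N1(v)` of `v` in the digraph with arc relation `D`. -/
def outNbr {V : Type*} (D : V → V → Prop) (v : V) : Set V := {w | w ≠ v ∧ D v w}

/-- The inneighbourhood `N⁻(v)` of `v`. -/
def inNbr {V : Type*} (D : V → V → Prop) (v : V) : Set V := {w | w ≠ v ∧ D w v}

/-- The second outneighbourhood `N2(v)` of `v`. -/
def outNbr2 {V : Type*} (D : V → V → Prop) (v : V) : Set V :=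
  {w | w ∉ insert v (outNbr D v) ∧ ∃ u ∈ outNbr D v, D u w}

/-- `v` is a Seymour vertex: `|N2(v)| ≥ |N1(v)|`. -/
def SeymourVertex {V : Type*} (D : V → V → Prop) (v : V) : Prop :=
  (outNbr D v).ncard ≤ (outNbr2 D v).ncard

/-- `v` is a Sullivan vertex: `|N2(v)| ≥ |N⁻(v)|`. -/
def SullivanVertex {V : Type*} (D : V → V → Prop) (v : V) : Prop :=
  (inNbr D v).ncard ≤ (outNbr2 D v).ncard

/-- An oriented graph: an asymmetric (hence irreflexive and loopless) arc relation. -/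
def OrientedGraph {V : Type*} (D : V → V → Prop) : Prop := ∀ u v, D u v → ¬ D v u

/-- `D` is an orientation of the simple graph `G`. -/
def Orients {V : Type*} (D : V → V → Prop) (G : SimpleGraph V) : Prop :=
  OrientedGraph D ∧ ∀ u v, G.Adj u v ↔ (D u v ∨ D v u)

/-- Strong connectivity of a digraph: every vertex reaches every other by a directed path. -/
def StrongConn {V : Type*} (D : V → V → Prop) : Prop := ∀ u v, Relation.ReflTransGen D u v

/-- The number of edges of `G` with one endpoint in `A` and the other in `B`
(counted via ordered pairs; equals `e(A,B)` for disjoint `A`, `B`). -/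
noncomputable def eBtw {V : Type*} (G : SimpleGraph V) (A B : Set V) : ℕ :=
  {p : V × V | p.1 ∈ A ∧ p.2 ∈ B ∧ G.Adj p.1 p.2}.ncard

/-- The number of edges of `G` with both endpoints in `A`. -/
noncomputable def eIn {V : Type*} (G : SimpleGraph V) (A : Set V) : ℕ :=
  {e | e ∈ G.edgeSet ∧ ∀ v ∈ e, v ∈ A}.ncard

open scoped Classical in
/-- The probability that the binomial random graph `G(n,p)` satisfies the property `P`. -/
noncomputable def gnpProb (n : ℕ) (p : ℝ) (P : SimpleGraph (Fin n) → Prop) : ℝ :=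
  ∑ G : SimpleGraph (Fin n),
    if P G then p ^ G.edgeSet.ncard * (1 - p) ^ (n.choose 2 - G.edgeSet.ncard) else 0

/-!
If `p * n ≤ log n / 4`, the second moment method yields an isolated vertex, which is a Sullivan
vertex. Otherwise suppose that `D` orients `G(n, p)` without a Sullivan vertex. Since the average
outdegree is about `p * n / 2` and `p` is bounded away from `1 / 2`, the set `U` of vertices of
outdegree at least `(p + 2 * δ) * (p * n)` has linear size. Let `v` be a vertex of total degree at
most `(1 + δ) * (p * n)`, as are nearly all vertices. As `|N2(v)| < |N⁻(v)|`, the set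
`S = N1(v) ∪ N2(v)` has at most `(1 + δ) * (p * n)` elements, and it contains the heads of all the
arcs leaving `A = N1(v) ∩ U`. But in a random graph, unless `A` is small, only about
`p * |A| * |S|` edges inside `S` meet `A`, fewer than the `(p + 2 * δ) * (p * n) * |A|` arcs that
leave `A`. So `A` is small, that is, few arcs enter `U`, contradicting that `U` spans about
`p * |U| ^ 2 / 2` edges.
-/

open scoped Finset

/-- The arcs of the digraph `D` with tail in `A` and head in `B`. -/
def arcsBetween {V : Type*} (D : V → V → Prop) (A B : Set V) : Set (V × V) :=
  {a | a.1 ∈ A ∧ a.2 ∈ B ∧ D a.1 a.2}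

/-- The total degree of `v` in the digraph `D`: the number of arcs leaving `v` plus the number of
arcs entering `v`. If `D` orients `G`, this is the degree of `v` in `G`. -/
noncomputable def totalDegree {V : Type*} (D : V → V → Prop) (v : V) : ℕ :=
  (outNbr D v).ncard + (inNbr D v).ncard

section Digraph

variable {V : Type*} {D : V → V → Prop}

theorem OrientedGraph.irrefl (hD : OrientedGraph D) (v : V) : ¬ D v v :=
  fun h => hD v v h h

theorem OrientedGraph.flip (hD : OrientedGraph D) : OrientedGraph (flip D) :=
  fun u v => hD v u

theorem OrientedGraph.mem_outNbr (hD : OrientedGraph D) {v w : V} :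
    w ∈ outNbr D v ↔ D v w :=
  and_iff_right_of_imp fun h hwv => hD.irrefl v (hwv ▸ h)

theorem OrientedGraph.outNbr_subset_of_mem (hD : OrientedGraph D) {u v : V}
    (hu : u ∈ outNbr D v) : outNbr D u ⊆ outNbr D v ∪ outNbr2 D v := by
  intro w hw
  by_cases hvw : w ∈ outNbr D v
  · exact Or.inl hvw
  · refine Or.inr ⟨?_, u, hu, hD.mem_outNbr.1 hw⟩
    rintro (rfl | h)
    · exact hD _ _ (hD.mem_outNbr.1 hu) (hD.mem_outNbr.1 hw)
    · exact hvw h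

theorem ncard_outNbr_union_outNbr2_le_totalDegree {v : V} (hv : ¬ SullivanVertex D v) :
    (outNbr D v ∪ outNbr2 D v).ncard ≤ totalDegree D v :=
  (Set.ncard_union_le _ _).trans (Nat.add_le_add_left (not_le.1 hv).le _)

variable [Finite V]

theorem OrientedGraph.sum_ncard_outNbr_inter (hD : OrientedGraph D) (A : Finset V) (B : Set V) :
    ∑ u ∈ A, (outNbr D u ∩ B).ncard = (arcsBetween D A B).ncard := by
  have hfibre : arcsBetween D A B = ⋃ u ∈ (A : Set V), Prod.mk u '' (outNbr D u ∩ B) := by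
    ext ⟨u, w⟩
    simp only [arcsBetween, Set.mem_ofPred_eq, Set.mem_iUnion, Set.mem_image, Set.mem_inter_iff,
      hD.mem_outNbr, Prod.mk.injEq]
    grind
  rw [hfibre, A.finite_toSet.ncard_biUnion (fun _ _ => Set.toFinite _),
    finsum_mem_coe_finset]
  · exact Finset.sum_congr rfl fun u _ =>
      (Set.ncard_image_of_injective _ (Prod.mk_right_injective u)).symm
  · intro u _ u' _ huu'
    rw [Function.onFun, Set.disjoint_left]
    rintro _ ⟨w, -, rfl⟩ ⟨w', -, h⟩
    exact huu' (congrArg Prod.fst h).symm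

theorem OrientedGraph.sum_ncard_outNbr (hD : OrientedGraph D) (A : Finset V) :
    ∑ u ∈ A, (outNbr D u).ncard = (arcsBetween D A Set.univ).ncard := by
  simpa using hD.sum_ncard_outNbr_inter A Set.univ

theorem OrientedGraph.sum_ncard_inNbr (hD : OrientedGraph D) (B : Finset V) :
    ∑ v ∈ B, (inNbr D v).ncard = (arcsBetween D Set.univ B).ncard := by
  have hswap : arcsBetween D Set.univ B = Prod.swap '' arcsBetween (_root_.flip D) B Set.univ := by
    ext ⟨u, w⟩
    simp [arcsBetween, _root_.flip]
  rw [hswap, Set.ncard_image_of_injective _ Prod.swap_injective]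
  exact hD.flip.sum_ncard_outNbr B

end Digraph

section Orientation

variable {V : Type*} {G : SimpleGraph V} {D : V → V → Prop}

theorem Orients.sullivanVertex_of_isIsolated (h : Orients D G) {v : V}
    (hv : G.IsIsolated v) : SullivanVertex D v := by
  have hempty : inNbr D v = ∅ :=
    Set.eq_empty_of_forall_notMem fun w hw => hv w ((h.2 v w).2 (Or.inr hw.2))
  rw [SullivanVertex, hempty, Set.ncard_empty]
  exact Nat.zero_le _

theorem Orients.ncard_arcsBetween_self (h : Orients D G) (X : Set V) :
    (arcsBetween D X X).ncard = eIn G X := by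
  refine Set.ncard_congr (fun a _ => s(a.1, a.2)) ?_ ?_ ?_
  · rintro ⟨u, w⟩ ⟨hu, hw, huw⟩
    exact ⟨(h.2 u w).2 (Or.inl huw), by simp [hu, hw]⟩
  · rintro ⟨u, w⟩ ⟨u', w'⟩ ⟨-, -, huw⟩ ⟨-, -, huw'⟩ heq
    rcases Sym2.eq_iff.1 heq with ⟨rfl, rfl⟩ | ⟨rfl, rfl⟩
    · rfl
    · exact absurd huw' (h.1 _ _ huw)
  · rintro ⟨u, w⟩ ⟨huw, hX⟩
    have hu : u ∈ X := hX u (Sym2.mem_mk_left u w)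
    have hw : w ∈ X := hX w (Sym2.mem_mk_right u w)
    rcases (h.2 u w).1 huw with huw | hwu
    · exact ⟨(u, w), ⟨hu, hw, huw⟩, rfl⟩
    · exact ⟨(w, u), ⟨hw, hu, hwu⟩, Sym2.eq_swap⟩

section Finite

variable [Finite V]

/- Both sides count the arcs with tail in `X` together with the arcs with head in `X`: the arcs
counted twice are those inside `X`, and the arcs not counted are those inside `Xᶜ`. -/
theorem Orients.sum_totalDegree_add_eIn_compl (h : Orients D G) (X : Finset V) :
    ∑ v ∈ X, totalDegree D v + eIn G (X : Set V)ᶜ = eIn G X + eIn G Set.univ := by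
  set T := arcsBetween D X Set.univ
  set H := arcsBetween D Set.univ X
  set C := arcsBetween D (X : Set V)ᶜ (X : Set V)ᶜ
  have hinter : T ∩ H = arcsBetween D X X := by
    ext; simp only [T, H, arcsBetween]; grind
  have hunion : (T ∪ H) ∪ C = arcsBetween D Set.univ Set.univ := by
    ext; simp only [T, H, C, arcsBetween]; grind
  have hdisj : Disjoint (T ∪ H) C := by
    rw [Set.disjoint_left]; simp only [T, H, C, arcsBetween]; grind
  simp only [totalDegree, Finset.sum_add_distrib]
  rw [h.1.sum_ncard_outNbr, h.1.sum_ncard_inNbr, ← h.ncard_arcsBetween_self,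
    ← h.ncard_arcsBetween_self, ← h.ncard_arcsBetween_self, ← hinter, ← hunion,
    Set.ncard_union_eq hdisj, ← Set.ncard_union_add_ncard_inter T H]
  ring

theorem Orients.sum_ncard_outNbr_add_eIn_sdiff_le (h : Orients D G) {A : Finset V} {S : Set V}
    (hAS : ↑A ⊆ S) (hout : ∀ u ∈ A, outNbr D u ⊆ S) :
    ∑ u ∈ A, (outNbr D u).ncard + eIn G (S \ A) ≤ eIn G S := by
  rw [h.1.sum_ncard_outNbr, ← h.ncard_arcsBetween_self, ← h.ncard_arcsBetween_self,
    ← Set.ncard_union_eq]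
  · refine Set.ncard_le_ncard ?_
    rintro ⟨u, w⟩ (⟨hu, -, huw⟩ | ⟨hu, hw, huw⟩)
    · exact ⟨hAS hu, hout u hu (h.1.mem_outNbr.2 huw), huw⟩
    · exact ⟨hu.1, hw.1, huw⟩
  · exact Set.disjoint_left.2 fun a hA hS => hS.1.2 hA.1

end Finite

variable [Fintype V]

theorem Orients.eIn_univ_eq_sum (h : Orients D G) :
    eIn G Set.univ = ∑ v, (outNbr D v).ncard := by
  rw [h.1.sum_ncard_outNbr, Finset.coe_univ, h.ncard_arcsBetween_self]

theorem Orients.eIn_le_sum_ncard_outNbr_inter (h : Orients D G) (X : Set V) :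
    eIn G X ≤ ∑ v, (outNbr D v ∩ X).ncard := by
  rw [h.1.sum_ncard_outNbr_inter, ← h.ncard_arcsBetween_self]
  exact Set.ncard_le_ncard fun a ha => ⟨Finset.mem_coe.2 (Finset.mem_univ _), ha.2⟩

end Orientation

section Deterministic

/-- `G` is edge-regular with density `p` and error `η` if every vertex set `X` spans
`p * |X| (|X| - 1) / 2` edges, up to an error of `η * (p * |V| ^ 2)`. -/
def EdgeRegular {V : Type*} [Fintype V] (G : SimpleGraph V) (p η : ℝ) : Prop :=
  ∀ X : Finset V, |(eIn G X : ℝ) - p * ((#X).choose 2 : ℕ)| ≤ η * (p * Fintype.card V ^ 2)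

/-- `G` is locally sparse if, for every set `A` of at least `a` vertices inside a set `S` of at
most `s` vertices, the number of edges of `G[S]` meeting `A` is less than `c * |A|`. -/
def LocallySparse {V : Type*} (G : SimpleGraph V) (a s c : ℝ) : Prop :=
  ∀ A S : Finset V, A ⊆ S → a ≤ #A → #S ≤ s →
    (eIn G S : ℝ) < eIn G ((S : Set V) \ A) + c * #A

/-- `G` forces Sullivan vertices if each of its orientations has a Sullivan vertex. -/
def ForcesSullivan {V : Type*} (G : SimpleGraph V) : Prop :=
  ∀ D : V → V → Prop, Orients D G → ∃ v, SullivanVertex D v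

/- Take `A = N1(v) ∩ U` and `S = N1(v) ∪ N2(v)`: all arcs leaving `A` stay inside `S`, and `S` has
at most `totalDegree D v` vertices because `v` is not a Sullivan vertex. -/
theorem LocallySparse.ncard_outNbr_inter_lt {V : Type*} [Finite V] {G : SimpleGraph V}
    {D : V → V → Prop} {a s c : ℝ} (hG : LocallySparse G a s c)
    (h : Orients D G) {v : V} (hv : ¬ SullivanVertex D v) (hs : totalDegree D v ≤ s) {U : Set V}
    (hU : ∀ u ∈ U, c ≤ (outNbr D u).ncard) : ((outNbr D v ∩ U).ncard : ℝ) < a := by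
  by_contra! ha
  obtain ⟨S, hS⟩ := (Set.toFinite (outNbr D v ∪ outNbr2 D v)).exists_finset_coe
  obtain ⟨A, hA⟩ := (Set.toFinite (outNbr D v ∩ U)).exists_finset_coe
  have hmem (u) (hu : u ∈ A) : u ∈ outNbr D v ∩ U := hA ▸ Finset.mem_coe.2 hu
  have hAS : (A : Set V) ⊆ S :=
    hA ▸ hS ▸ Set.inter_subset_left.trans Set.subset_union_left
  have hcardA : a ≤ #A := by rwa [← Set.ncard_coe_finset, hA]
  have hcardS : (#S : ℝ) ≤ s := by
    rw [← Set.ncard_coe_finset, hS]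
    exact (Nat.cast_le.2 (ncard_outNbr_union_outNbr2_le_totalDegree hv)).trans hs
  have hout (u) (hu : u ∈ A) : outNbr D u ⊆ S :=
    hS ▸ h.1.outNbr_subset_of_mem (hmem u hu).1
  have hcount : ∑ u ∈ A, ((outNbr D u).ncard : ℝ) + eIn G ((S : Set V) \ A) ≤ eIn G S :=
    mod_cast h.sum_ncard_outNbr_add_eIn_sdiff_le hAS hout
  have hlower : #A • c ≤ ∑ u ∈ A, ((outNbr D u).ncard : ℝ) :=
    Finset.card_nsmul_le_sum _ _ _ fun u hu => hU u (hmem u hu).2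
  rw [nsmul_eq_mul] at hlower
  linarith [hG A S (Finset.coe_subset.1 hAS) hcardA hcardS]

variable {V : Type*} [Fintype V] {G : SimpleGraph V} {D : V → V → Prop} {p η : ℝ}

local notation "n" => (Fintype.card V : ℝ)

theorem EdgeRegular.sum_totalDegree_le (hG : EdgeRegular G p η) (hp : 0 ≤ p) (h : Orients D G)
    (X : Finset V) : (∑ v ∈ X, totalDegree D v : ℝ) ≤ p * n * #X + 3 * η * (p * n ^ 2) := by
  classical
  have hX := abs_le.1 (hG X)
  have hV := abs_le.1 (hG Finset.univ)
  have hXc := abs_le.1 (hG Xᶜ)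
  have hcard : ((#Xᶜ : ℕ) : ℝ) = n - #X := by
    rw [Finset.card_compl, Nat.cast_sub (Finset.card_le_univ X)]
  have hdouble : (∑ v ∈ X, totalDegree D v : ℝ) + eIn G (X : Set V)ᶜ = eIn G X + eIn G Set.univ :=
    mod_cast h.sum_totalDegree_add_eIn_compl X
  rw [Finset.coe_univ, Finset.card_univ] at hV
  rw [Finset.coe_compl] at hXc
  simp only [Nat.cast_choose_two, hcard] at hX hV hXc
  nlinarith [mul_nonneg hp (Nat.cast_nonneg (α := ℝ) #X)]

theorem EdgeRegular.le_card_large_outNbr (hG : EdgeRegular G p η) (hp : 0 ≤ p) (h : Orients D G)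
    {c : ℝ} (hc : 0 ≤ c) {U : Finset V} (hU : ∀ u ∉ U, ((outNbr D u).ncard : ℝ) ≤ c) :
    p * (n * (n - 1) / 2) ≤ p * n * #U + c * n + 4 * η * (p * n ^ 2) := by
  classical
  have hedges := (abs_le.1 (hG Finset.univ)).1
  rw [Finset.coe_univ, Finset.card_univ, Nat.cast_choose_two] at hedges
  have hsplit : (eIn G Set.univ : ℝ) =
      ∑ u ∈ U, ((outNbr D u).ncard : ℝ) + ∑ u ∈ Uᶜ, ((outNbr D u).ncard : ℝ) := by
    rw [Finset.sum_add_sum_compl]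
    exact_mod_cast h.eIn_univ_eq_sum
  have hlarge : ∑ u ∈ U, ((outNbr D u).ncard : ℝ) ≤ ∑ u ∈ U, (totalDegree D u : ℝ) :=
    Finset.sum_le_sum fun u _ => Nat.cast_le.2 (Nat.le_add_right _ _)
  have hsmall : ∑ u ∈ Uᶜ, ((outNbr D u).ncard : ℝ) ≤ c * n :=
    calc ∑ u ∈ Uᶜ, ((outNbr D u).ncard : ℝ)
        ≤ #Uᶜ • c := Finset.sum_le_card_nsmul _ _ _ fun u hu => hU u (Finset.mem_compl.1 hu)
      _ = c * #Uᶜ := by rw [nsmul_eq_mul, mul_comm]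
      _ ≤ c * n := by gcongr; exact Finset.card_le_univ _
  linarith [hG.sum_totalDegree_le hp h U]

theorem EdgeRegular.mul_sum_totalDegree_le (hG : EdgeRegular G p η) (hp : 0 ≤ p)
    (h : Orients D G) {δ : ℝ} (hδ : 0 ≤ δ) {W : Finset V}
    (hW : ∀ w ∈ W, (1 + δ) * (p * n) ≤ totalDegree D w) :
    δ * ∑ w ∈ W, (totalDegree D w : ℝ) ≤ (1 + δ) * (3 * η * (p * n ^ 2)) := by
  have hlower : #W • ((1 + δ) * (p * n)) ≤ ∑ w ∈ W, (totalDegree D w : ℝ) :=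
    Finset.card_nsmul_le_sum _ _ _ hW
  rw [nsmul_eq_mul] at hlower
  nlinarith [hG.sum_totalDegree_le hp h W]

theorem EdgeRegular.le_eIn (hG : EdgeRegular G p η) (hp : 0 ≤ p) {x : ℝ} (hx : 1 ≤ x)
    {X : Finset V} (hX : x ≤ #X) :
    p * (x * (x - 1) / 2) - η * (p * n ^ 2) ≤ eIn G X := by
  have hedges := (abs_le.1 (hG X)).1
  rw [Nat.cast_choose_two] at hedges
  have hmono : p * (x * (x - 1) / 2) ≤ p * (#X * (#X - 1) / 2) := by gcongr
  linarith

/- Vertices of total degree at most `s` contribute less than `a` each to the number of arcs into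
`U`. -/
theorem LocallySparse.eIn_le {a s c : ℝ} (hG : LocallySparse G a s c) (ha : 0 ≤ a)
    (h : Orients D G) (hD : ∀ v, ¬ SullivanVertex D v) {U W : Finset V}
    (hU : ∀ u ∈ U, c ≤ (outNbr D u).ncard) (hW : ∀ v ∉ W, (totalDegree D v : ℝ) ≤ s) :
    (eIn G U : ℝ) ≤ a * n + ∑ w ∈ W, (totalDegree D w : ℝ) := by
  classical
  have hlow : ∑ v ∈ Wᶜ, ((outNbr D v ∩ U).ncard : ℝ) ≤ a * n :=
    calc ∑ v ∈ Wᶜ, ((outNbr D v ∩ U).ncard : ℝ)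
        ≤ #Wᶜ • a := Finset.sum_le_card_nsmul _ _ _ fun v hv =>
          (hG.ncard_outNbr_inter_lt h (hD v) (hW v (Finset.mem_compl.1 hv)) hU).le
      _ = a * #Wᶜ := by rw [nsmul_eq_mul, mul_comm]
      _ ≤ a * n := by gcongr; exact Finset.card_le_univ _
  have hhigh : ∑ v ∈ W, ((outNbr D v ∩ U).ncard : ℝ) ≤ ∑ v ∈ W, (totalDegree D v : ℝ) :=
    Finset.sum_le_sum fun v _ => Nat.cast_le.2 <|
      (Set.ncard_le_ncard Set.inter_subset_left).trans (Nat.le_add_right _ _)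
  calc (eIn G U : ℝ) ≤ ∑ v, ((outNbr D v ∩ U).ncard : ℝ) :=
        mod_cast h.eIn_le_sum_ncard_outNbr_inter U
    _ = ∑ v ∈ W, ((outNbr D v ∩ U).ncard : ℝ) + ∑ v ∈ Wᶜ, ((outNbr D v ∩ U).ncard : ℝ) :=
        (Finset.sum_add_sum_compl W _).symm
    _ ≤ a * n + ∑ w ∈ W, (totalDegree D w : ℝ) := by linarith

theorem EdgeRegular.mul_card_le_card_large_outNbr {δ : ℝ} (hG : EdgeRegular G p (δ ^ 4))
    (hp : 0 < p) (hpδ : p ≤ 1 / 2 - 4 * δ) (hδ : 0 < δ) (hδ' : δ ≤ 1 / 10) (hn : 1 ≤ δ ^ 4 * n)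
    (h : Orients D G) {U : Finset V}
    (hU : ∀ u ∉ U, ((outNbr D u).ncard : ℝ) ≤ (p + 2 * δ) * (p * n)) : δ * n ≤ #U := by
  have hn0 : 0 < n := pos_of_mul_pos_right (zero_lt_one.trans_le hn) (by positivity)
  have hδ2 : δ ^ 2 ≤ 1 / 100 := by nlinarith
  have hδ4 : δ ^ 4 ≤ δ / 1000 := by nlinarith [sq_nonneg δ]
  have hdiv : (n - 1) / 2 ≤ #U + (p + 2 * δ) * n + 4 * δ ^ 4 * n := by
    refine le_of_mul_le_mul_left ?_ (mul_pos hp hn0)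
    linarith [hG.le_card_large_outNbr hp.le h (by positivity) hU]
  nlinarith

theorem EdgeRegular.forcesSullivan {δ : ℝ} (hG : EdgeRegular G p (δ ^ 4))
    (hsparse : LocallySparse G (δ ^ 2 / 8 * (p * n)) ((1 + δ) * (p * n)) ((p + 2 * δ) * (p * n)))
    (hp : 0 < p) (hpδ : p ≤ 1 / 2 - 4 * δ) (hδ : 0 < δ) (hδ' : δ ≤ 1 / 10)
    (hn : 1 ≤ δ ^ 4 * n) : ForcesSullivan G := by
  intro D h
  by_contra! hD
  have hn0 : 0 < n := pos_of_mul_pos_right (zero_lt_one.trans_le hn) (by positivity)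
  have hδ3 : δ ^ 3 ≤ δ ^ 2 / 10 := by nlinarith [sq_nonneg δ]
  have hδ4 : δ ^ 4 ≤ δ ^ 2 / 100 := by nlinarith [sq_nonneg δ]
  set U : Finset V := {u | (p + 2 * δ) * (p * n) ≤ (outNbr D u).ncard}
  set W : Finset V := {w | (1 + δ) * (p * n) ≤ totalDegree D w}
  have hmemU {u : V} : u ∈ U ↔ (p + 2 * δ) * (p * n) ≤ (outNbr D u).ncard := by simp [U]
  have hmemW {w : V} : w ∈ W ↔ (1 + δ) * (p * n) ≤ totalDegree D w := by simp [W]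
  have hU : δ * n ≤ #U := hG.mul_card_le_card_large_outNbr hp hpδ hδ hδ' hn h
    fun u hu => (not_le.1 (mt hmemU.2 hu)).le
  have hW : ∑ w ∈ W, (totalDegree D w : ℝ) ≤ (1 + δ) * (3 * δ ^ 3) * (p * n * n) := by
    refine le_of_mul_le_mul_left ?_ hδ
    linarith [hG.mul_sum_totalDegree_le hp.le h hδ.le fun w => hmemW.1]
  have hupper := hsparse.eIn_le (by positivity) h hD (fun u => hmemU.1)
    fun v hv => (not_le.1 (mt hmemW.2 hv)).le
  have hlower := hG.le_eIn hp.le (x := δ * n) (by nlinarith [pow_pos hδ 3]) hU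
  have hfactor : δ * (δ * n - 1) / 2 - δ ^ 4 * n ≤
      δ ^ 2 / 8 * n + (1 + δ) * (3 * δ ^ 3) * n := by
    refine le_of_mul_le_mul_left ?_ (mul_pos hp hn0)
    linarith
  nlinarith [mul_pos (pow_pos hδ 2) hn0]

end Deterministic

section SecondMoment

open MeasureTheory ProbabilityTheory

variable {Ω ι : Type*} [MeasurableSpace Ω] {μ : Measure Ω} [IsProbabilityMeasure μ]
  [Fintype ι] {A : ι → Set Ω}

theorem memLp_sum_indicator_one (hA : ∀ i, MeasurableSet (A i)) (q : ENNReal) :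
    MemLp (fun ω => ∑ i, (A i).indicator (1 : Ω → ℝ) ω) q μ :=
  memLp_finsetSum _ fun i _ => memLp_indicator_const q (hA i) 1 (Or.inr (measure_ne_top _ _))

theorem integral_sum_indicator_one (hA : ∀ i, MeasurableSet (A i)) :
    ∫ ω, ∑ i, (A i).indicator (1 : Ω → ℝ) ω ∂μ = ∑ i, μ.real (A i) := by
  rw [integral_finsetSum]
  · exact Finset.sum_congr rfl fun i _ => integral_indicator_one (hA i)
  · exact fun i _ => (integrable_const (1 : ℝ)).indicator (hA i)

theorem integral_sum_indicator_one_sq (hA : ∀ i, MeasurableSet (A i)) :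
    ∫ ω, (∑ i, (A i).indicator (1 : Ω → ℝ) ω) ^ 2 ∂μ = ∑ i, ∑ j, μ.real (A i ∩ A j) := by
  have hsq (ω : Ω) : (∑ i, (A i).indicator (1 : Ω → ℝ) ω) ^ 2 =
      ∑ ij : ι × ι, (A ij.1 ∩ A ij.2).indicator 1 ω := by
    rw [sq, Finset.sum_mul_sum, ← Fintype.sum_prod_type']
    simp only [Set.inter_indicator_one, Pi.mul_apply]
  simp only [hsq]
  rw [integral_sum_indicator_one (A := fun ij : ι × ι => A ij.1 ∩ A ij.2)
    fun ij => (hA ij.1).inter (hA ij.2), Fintype.sum_prod_type]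

theorem variance_sum_indicator_one_le (hA : ∀ i, MeasurableSet (A i)) {q κ : ℝ}
    (hκ : 0 ≤ κ) (hprob : ∀ i, μ.real (A i) = q)
    (hpair : Pairwise fun i j => μ.real (A i ∩ A j) ≤ (1 + κ) * q ^ 2) :
    Var[fun ω => ∑ i, (A i).indicator (1 : Ω → ℝ) ω; μ] ≤
      Fintype.card ι * q + κ * (Fintype.card ι * q) ^ 2 := by
  classical
  have hterm (i j : ι) : μ.real (A i ∩ A j) ≤ (if i = j then q else 0) + (1 + κ) * q ^ 2 := by
    rcases eq_or_ne i j with rfl | hij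
    · rw [Set.inter_self, hprob, if_pos rfl]
      exact le_add_of_nonneg_right (by positivity)
    · rw [if_neg hij, zero_add]
      exact hpair hij
  have hsecond : ∑ i, ∑ j, μ.real (A i ∩ A j) ≤
      Fintype.card ι * q + Fintype.card ι ^ 2 * ((1 + κ) * q ^ 2) :=
    calc ∑ i, ∑ j, μ.real (A i ∩ A j)
        ≤ ∑ i : ι, ∑ j : ι, ((if i = j then q else 0) + (1 + κ) * q ^ 2) := by
          gcongr with i _ j _; exact hterm i j
      _ = Fintype.card ι * q + Fintype.card ι ^ 2 * ((1 + κ) * q ^ 2) := by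
          simp [Finset.sum_add_distrib]; ring
  have hmean : ∑ i, μ.real (A i) = Fintype.card ι * q := by simp [hprob]
  rw [variance_eq_sub (memLp_sum_indicator_one hA 2)]
  simp only [Pi.pow_apply]
  rw [integral_sum_indicator_one_sq hA, integral_sum_indicator_one hA, hmean]
  linarith

/- The Chebyshev inequality for the number of the events `A i` that occur. -/
theorem measureReal_iInter_compl_le_of_pairwise [Nonempty ι] (hA : ∀ i, MeasurableSet (A i))
    {q κ : ℝ} (hq : 0 < q) (hκ : 0 ≤ κ) (hprob : ∀ i, μ.real (A i) = q)
    (hpair : Pairwise fun i j => μ.real (A i ∩ A j) ≤ (1 + κ) * q ^ 2) :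
    μ.real (⋂ i, (A i)ᶜ) ≤ 1 / (Fintype.card ι * q) + κ := by
  set N : ℝ := (Fintype.card ι : ℝ)
  have hN : 0 < N := Nat.cast_pos.2 Fintype.card_pos
  set X : Ω → ℝ := fun ω => ∑ i, (A i).indicator 1 ω
  have hX : MemLp X 2 μ := memLp_sum_indicator_one hA 2
  have hmean : μ[X] = N * q := by
    rw [integral_sum_indicator_one hA]
    simp [hprob, N]
  have hsub : ⋂ i, (A i)ᶜ ⊆ {ω | N * q ≤ |X ω - μ[X]|} := by
    intro ω hω
    have hzero : X ω = 0 := Finset.sum_eq_zero fun i _ =>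
      Set.indicator_of_notMem (Set.mem_iInter.1 hω i) _
    rw [Set.mem_ofPred_eq, hzero, hmean, zero_sub, abs_neg]
    exact le_abs_self _
  calc μ.real (⋂ i, (A i)ᶜ) ≤ Var[X; μ] / (N * q) ^ 2 := ENNReal.toReal_le_of_le_ofReal
        (div_nonneg (variance_nonneg _ _) (sq_nonneg _))
        ((measure_mono hsub).trans (meas_ge_le_variance_div_sq hX (by positivity)))
    _ ≤ (N * q + κ * (N * q) ^ 2) / (N * q) ^ 2 := by
      gcongr
      exact variance_sum_indicator_one_le hA hκ hprob hpair
    _ = 1 / (N * q) + κ := by field_simp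

end SecondMoment

section BinomialRandomGraph

open MeasureTheory ProbabilityTheory unitInterval
open scoped SimpleGraph

instance {V : Type*} [Finite V] : MeasurableSingletonClass (SimpleGraph V) where
  measurableSet_singleton G := by
    rw [← SimpleGraph.edgeSet_injective.preimage_image {G}, Set.image_singleton]
    exact SimpleGraph.measurable_edgeSet (measurableSet_singleton _)

theorem gnpProb_eq_measureReal (n : ℕ) (p : I) (P : SimpleGraph (Fin n) → Prop) :
    gnpProb n p P = G(Fin n, p).real {G | P G} := by
  classical
  have hsingleton (G : SimpleGraph (Fin n)) : G(Fin n, p).real {G} =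
      (p : ℝ) ^ G.edgeSet.ncard * (1 - p) ^ (n.choose 2 - G.edgeSet.ncard) := by
    simp [measureReal_def, SimpleGraph.binomialRandom_singleton]
  rw [← Finset.coe_filter_univ, ← sum_measureReal_singleton, Finset.sum_filter]
  simp only [hsingleton]
  exact Finset.sum_congr rfl fun G _ => by congr

theorem dist_gnpProb_one (n : ℕ) (p : I) (P : SimpleGraph (Fin n) → Prop) :
    dist (gnpProb n p P) 1 = G(Fin n, p).real {G | ¬ P G} := by
  have hcompl : G(Fin n, p).real {G | P G} + G(Fin n, p).real {G | ¬ P G} = 1 :=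
    probReal_add_probReal_compl .of_discrete
  rw [gnpProb_eq_measureReal, ← hcompl, dist_self_add_right, Real.norm_of_nonneg measureReal_nonneg]

open scoped Classical in
theorem integral_prod_edgeSet_binomialRandom {V : Type*} [Finite V] {p : I}
    {F : Finset (Sym2 V)} (hF : ∀ e ∈ F, ¬ e.IsDiag) (a b : ℝ) :
    ∫ G, ∏ e ∈ F, (if e ∈ G.edgeSet then a else b) ∂G(V, p) = (p * a + (1 - p) * b) ^ #F := by
  have := Fintype.ofFinite V
  have hmeas : Measurable fun ω : Sym2 V → Prop => {e | ω e} :=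
    MeasurableEquiv.setOfPred.measurable
  rw [SimpleGraph.binomialRandom_eq_map, setBernoulli_eq_map,
    Measure.map_map SimpleGraph.measurable_fromEdgeSet hmeas,
    integral_map (by fun_prop) (by fun_prop), Measure.infinitePi_eq_pi]
  let f (e : Sym2 V) (x : Prop) : ℝ := if e ∈ F then (if x then a else b) else 1
  have hprod (ω : Sym2 V → Prop) :
      ∏ e ∈ F, (if e ∈ ((SimpleGraph.fromEdgeSet ∘ fun ω => {e | ω e}) ω).edgeSet then a else b) =
        ∏ e, f e (ω e) := by
    rw [Fintype.prod_ite_mem]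
    exact Finset.prod_congr rfl fun e he => by simp [hF e he]
  have hfactor (e : Sym2 V) :
      ∫ x, f e x ∂(toNNReal p • Measure.dirac (e ∈ Sym2.diagSetᶜ) +
        toNNReal (σ p) • Measure.dirac False) = if e ∈ F then p * a + (1 - p) * b else 1 := by
    rw [integral_add_measure .of_finite .of_finite, integral_smul_nnreal_measure,
      integral_smul_nnreal_measure, integral_dirac, integral_dirac]
    by_cases he : e ∈ F <;> simp [f, he, hF, NNReal.smul_def]
  simp only [hprod]
  rw [integral_fintype_prod_eq_prod, ← Finset.prod_const,
    Finset.prod_congr rfl fun e _ => hfactor e, Fintype.prod_ite_mem]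

section EdgeCount

variable {V : Type*} [Finite V] {p : I} {F : Finset (Sym2 V)}

theorem mgf_ncard_edgeSet_inter (hF : ∀ e ∈ F, ¬ e.IsDiag) (t : ℝ) :
    mgf (fun G => ((G.edgeSet ∩ F).ncard : ℝ)) G(V, p) t =
      (1 + p * (Real.exp t - 1)) ^ #F := by
  classical
  have hexp (G : SimpleGraph V) : Real.exp (t * (G.edgeSet ∩ F).ncard) =
      ∏ e ∈ F, if e ∈ G.edgeSet then Real.exp t else 1 := by
    rw [Finset.prod_ite, Finset.prod_const, Finset.prod_const_one, mul_one, ← Real.exp_nat_mul,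
      mul_comm t, ← Set.ncard_coe_finset, Finset.coe_filter]
    congr 4
    grind
  simp only [mgf, hexp]
  rw [integral_prod_edgeSet_binomialRandom hF]
  ring

theorem mgf_ncard_edgeSet_inter_le (hF : ∀ e ∈ F, ¬ e.IsDiag) (t : ℝ) :
    mgf (fun G => ((G.edgeSet ∩ F).ncard : ℝ)) G(V, p) t ≤
      Real.exp (p * #F * (Real.exp t - 1)) := by
  rw [mgf_ncard_edgeSet_inter hF, mul_right_comm, mul_comm _ (#F : ℝ), Real.exp_nat_mul,
    add_comm 1]
  gcongr
  · nlinarith [p.2.1, p.2.2, Real.exp_pos t]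
  · exact Real.add_one_le_exp _

theorem measureReal_le_ncard_edgeSet_inter_le (hF : ∀ e ∈ F, ¬ e.IsDiag) {t : ℝ} (ht : 0 ≤ t)
    (x : ℝ) : G(V, p).real {G | x ≤ (G.edgeSet ∩ F).ncard} ≤
      Real.exp (p * #F * (Real.exp t - 1) - t * x) := by
  refine (measure_ge_le_exp_mul_mgf x ht .of_finite).trans ?_
  rw [sub_eq_neg_add, Real.exp_add, neg_mul]
  gcongr
  exact mgf_ncard_edgeSet_inter_le hF t

theorem measureReal_ncard_edgeSet_inter_le_le (hF : ∀ e ∈ F, ¬ e.IsDiag) {t : ℝ} (ht : t ≤ 0)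
    (x : ℝ) : G(V, p).real {G | ((G.edgeSet ∩ F).ncard : ℝ) ≤ x} ≤
      Real.exp (p * #F * (Real.exp t - 1) - t * x) := by
  refine (measure_le_le_exp_mul_mgf x ht .of_finite).trans ?_
  rw [sub_eq_neg_add, Real.exp_add, neg_mul]
  gcongr
  exact mgf_ncard_edgeSet_inter_le hF t

theorem measureReal_le_abs_ncard_edgeSet_inter_sub_le (hF : ∀ e ∈ F, ¬ e.IsDiag) {η m : ℝ}
    (hη : 0 ≤ η) (hη' : η ≤ 1) (hm : (p : ℝ) * #F ≤ m) :
    G(V, p).real {G | 2 * η * m ≤ |((G.edgeSet ∩ F).ncard : ℝ) - p * #F|} ≤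
      2 * Real.exp (-(η ^ 2 * m)) := by
  set μ : ℝ := p * #F
  have hμ : 0 ≤ μ := mul_nonneg p.2.1 (Nat.cast_nonneg _)
  have hexp {t : ℝ} (ht : |t| ≤ 1) (ht' : t ^ 2 = η ^ 2) :
      μ * (Real.exp t - 1) - t * μ ≤ η ^ 2 * m := by
    have := (le_abs_self _).trans (Real.abs_exp_sub_one_sub_id_le ht)
    nlinarith
  have hsub : {G : SimpleGraph V | 2 * η * m ≤ |((G.edgeSet ∩ F).ncard : ℝ) - μ|} ⊆
      {G | μ + 2 * η * m ≤ (G.edgeSet ∩ F).ncard} ∪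
        {G | ((G.edgeSet ∩ F).ncard : ℝ) ≤ μ - 2 * η * m} := by
    intro G hG
    simp only [Set.mem_union, Set.mem_ofPred_eq, le_abs] at hG ⊢
    exact hG.imp (by intro; linarith) (by intro; linarith)
  refine (measureReal_mono hsub).trans ((measureReal_union_le _ _).trans ?_)
  rw [two_mul (Real.exp _)]
  gcongr
  · refine (measureReal_le_ncard_edgeSet_inter_le hF hη _).trans (Real.exp_le_exp.2 ?_)
    have := hexp (abs_le.2 ⟨by linarith, hη'⟩) rfl
    linarith
  · refine (measureReal_ncard_edgeSet_inter_le_le hF (neg_nonpos.2 hη) _).trans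
      (Real.exp_le_exp.2 ?_)
    have := hexp (t := -η) (abs_le.2 ⟨by linarith, by linarith⟩) (neg_sq η)
    linarith

end EdgeCount

section Pairs

variable {V : Type*} [DecidableEq V]

/-- The unordered pairs of distinct elements of `X`, i.e. the edges of the complete graph
on `X`. -/
def pairsIn (X : Finset V) : Finset (Sym2 V) := {e ∈ X.sym2 | ¬ e.IsDiag}

theorem mem_pairsIn {X : Finset V} {e : Sym2 V} : e ∈ pairsIn X ↔ ¬ e.IsDiag ∧ ∀ v ∈ e, v ∈ X := by
  rw [pairsIn, Finset.mem_filter, Finset.mem_sym2_iff, and_comm]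

theorem card_pairsIn (X : Finset V) : #(pairsIn X) = (#X).choose 2 := by
  rw [pairsIn, Finset.sym2_eq_image, Sym2.filter_image_mk_not_isDiag, Sym2.card_image_offDiag]

theorem eIn_eq_ncard_edgeSet_inter (G : SimpleGraph V) (X : Finset V) :
    eIn G X = (G.edgeSet ∩ pairsIn X).ncard := by
  rw [eIn]
  congr 1
  ext e
  simp only [Set.mem_ofPred_eq, Set.mem_inter_iff, Finset.mem_coe, mem_pairsIn]
  exact and_congr_right fun he => (and_iff_right (G.not_isDiag_of_mem_edgeSet he)).symm

theorem eIn_eq_eIn_sdiff_add (G : SimpleGraph V) (A S : Finset V) :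
    eIn G S = eIn G ((S : Set V) \ A) +
      (G.edgeSet ∩ (pairsIn S \ pairsIn (S \ A) : Finset (Sym2 V))).ncard := by
  have hsub : pairsIn (S \ A) ⊆ pairsIn S := fun e => by
    simp only [mem_pairsIn, Finset.mem_sdiff]; grind
  rw [← Finset.coe_sdiff, eIn_eq_ncard_edgeSet_inter, eIn_eq_ncard_edgeSet_inter,
    Finset.coe_sdiff (pairsIn S), ← Set.inter_sdiff_assoc, ← Set.ncard_union_eq]
  · congr 1
    have := Finset.coe_subset.2 hsub
    grind
  · grind

theorem card_pairsIn_sdiff_le (A S : Finset V) :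
    #(pairsIn S \ pairsIn (S \ A)) ≤ #A * #S := by
  have hsub : pairsIn S \ pairsIn (S \ A) ⊆ (A ×ˢ S).image Sym2.mk.uncurry := fun e => by
    induction e with
    | h u w =>
      simp only [mem_pairsIn, Finset.mem_sdiff, Finset.mem_image, Finset.mem_product, Prod.exists,
        Function.uncurry_apply_pair, Sym2.eq_iff, Sym2.mk_isDiag_iff, Sym2.mem_iff]
      grind
  exact (Finset.card_le_card hsub).trans
    (Finset.card_image_le.trans (Finset.card_product A S).le)

variable [Fintype V]

/-- The unordered pairs of distinct vertices that contain `v`, i.e. the potential edges at `v`. -/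
def pairsAt (v : V) : Finset (Sym2 V) := (⊤ : SimpleGraph V).incidenceFinset v

theorem not_isDiag_of_mem_pairsAt {v : V} {e : Sym2 V} (he : e ∈ pairsAt v) : ¬ e.IsDiag := by
  rw [pairsAt, SimpleGraph.mem_incidenceFinset] at he
  exact SimpleGraph.not_isDiag_of_mem_edgeSet _ he.1

theorem card_pairsAt (v : V) : #(pairsAt v) = Fintype.card V - 1 := by
  rw [pairsAt, SimpleGraph.card_incidenceFinset_eq_degree, SimpleGraph.complete_graph_degree]

theorem pairsAt_inter_pairsAt {v w : V} (h : v ≠ w) : pairsAt v ∩ pairsAt w = {s(v, w)} := by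
  rw [← Finset.coe_inj, Finset.coe_inter, pairsAt, pairsAt, SimpleGraph.coe_incidenceFinset,
    SimpleGraph.coe_incidenceFinset, SimpleGraph.incidenceSet_inter_incidenceSet_of_adj,
    Finset.coe_singleton]
  exact h

theorem isIsolated_iff_disjoint_edgeSet {G : SimpleGraph V} {v : V} :
    G.IsIsolated v ↔ Disjoint G.edgeSet (pairsAt v) := by
  rw [← not_iff_not, Set.not_disjoint_iff, ← SimpleGraph.exists_adj_iff_not_isIsolated]
  constructor
  · rintro ⟨w, hw⟩
    refine ⟨s(v, w), hw, ?_⟩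
    rw [Finset.mem_coe, pairsAt, SimpleGraph.mem_incidenceFinset]
    exact ⟨hw.ne, Sym2.mem_mk_left v w⟩
  · rintro ⟨e, he, hve⟩
    rw [Finset.mem_coe, pairsAt, SimpleGraph.mem_incidenceFinset] at hve
    obtain ⟨w, rfl⟩ := hve.2
    exact ⟨w, he⟩

end Pairs

section UnionBound

theorem measureReal_eIn_sdiff_add_le_eIn_le {V : Type*} [Finite V] {p : I}
    {A S : Finset V} {a s c t r : ℝ} (hA : a ≤ #A) (hS : #S ≤ s) (ht : 0 ≤ t)
    (hr : 0 ≤ r) (hrate : r ≤ t * c - p * s * (Real.exp t - 1)) :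
    G(V, p).real {G | eIn G ((S : Set V) \ A) + c * #A ≤ (eIn G S : ℝ)} ≤ Real.exp (-(a * r)) := by
  classical
  set F := pairsIn S \ pairsIn (S \ A)
  have hF : ∀ e ∈ F, ¬ e.IsDiag := fun e he => (mem_pairsIn.1 (Finset.mem_sdiff.1 he).1).1
  have hcount : {G : SimpleGraph V | eIn G ((S : Set V) \ A) + c * #A ≤ (eIn G S : ℝ)} =
      {G | c * #A ≤ (G.edgeSet ∩ (F : Set (Sym2 V))).ncard} := by
    ext G
    simp only [Set.mem_ofPred_eq]
    rw [eIn_eq_eIn_sdiff_add G A S, Nat.cast_add, add_le_add_iff_left]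
  have hcard : (#F : ℝ) ≤ #A * s :=
    calc (#F : ℝ) ≤ #A * #S := mod_cast card_pairsIn_sdiff_le A S
      _ ≤ #A * s := by gcongr
  rw [hcount]
  refine (measureReal_le_ncard_edgeSet_inter_le hF ht _).trans (Real.exp_le_exp.2 ?_)
  have hexp : 0 ≤ p * (Real.exp t - 1) := mul_nonneg p.2.1 (by linarith [Real.add_one_le_exp t])
  calc (p : ℝ) * #F * (Real.exp t - 1) - t * (c * #A)
      = p * (Real.exp t - 1) * #F - t * (c * #A) := by ring
    _ ≤ p * (Real.exp t - 1) * (#A * s) - t * (c * #A) := by gcongr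
    _ = -(#A * (t * c - p * s * (Real.exp t - 1))) := by ring
    _ ≤ -(a * r) := by gcongr

variable {V : Type*} [Fintype V] {p : I}

local notation "n" => (Fintype.card V : ℝ)

theorem measureReal_not_edgeRegular_le {η : ℝ} (hη : 0 ≤ η) (hη' : η ≤ 1) :
    G(V, p).real {G | ¬ EdgeRegular G p η} ≤
      2 ^ Fintype.card V * (2 * Real.exp (-(η ^ 2 * (p * n ^ 2 / 2)))) := by
  classical
  have hsub : {G : SimpleGraph V | ¬ EdgeRegular G p η} ⊆ ⋃ X : Finset V,
      {G | 2 * η * (p * n ^ 2 / 2) ≤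
        |((G.edgeSet ∩ pairsIn X).ncard : ℝ) - p * #(pairsIn X)|} := by
    intro G hG
    simp only [EdgeRegular, Set.mem_ofPred_eq, not_forall, not_le] at hG
    obtain ⟨X, hX⟩ := hG
    refine Set.mem_iUnion.2 ⟨X, ?_⟩
    rw [Set.mem_ofPred_eq, ← eIn_eq_ncard_edgeSet_inter, card_pairsIn]
    linarith
  refine (measureReal_mono hsub).trans ((measureReal_iUnion_fintype_le _).trans ?_)
  calc _ ≤ ∑ _X : Finset V, 2 * Real.exp (-(η ^ 2 * (p * n ^ 2 / 2))) := by
        refine Finset.sum_le_sum fun X _ => measureReal_le_abs_ncard_edgeSet_inter_sub_le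
          (fun e he => (mem_pairsIn.1 he).1) hη hη' ?_
        have hX : (#X : ℝ) ≤ n := Nat.cast_le.2 (Finset.card_le_univ X)
        rw [card_pairsIn, mul_div_assoc, Nat.cast_choose_two]
        gcongr
        · exact p.2.1
        · nlinarith [Nat.cast_nonneg (α := ℝ) #X]
    _ = _ := by simp [Fintype.card_finset]

theorem card_nonempty_card_le_le (k : ℕ) :
    #{S : Finset V | S.Nonempty ∧ #S ≤ k} ≤ Fintype.card V ^ k := by
  classical
  have hsub : ({S : Finset V | S.Nonempty ∧ #S ≤ k} : Finset (Finset V)) ⊆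
      (Finset.univ : Finset (Fin k → V)).image fun f => Finset.univ.image f := by
    intro S hS
    obtain ⟨⟨v, hv⟩, hcard⟩ := (Finset.mem_filter.1 hS).2
    have : Nonempty S := ⟨⟨v, hv⟩⟩
    obtain ⟨g⟩ : Nonempty (S ↪ Fin k) :=
      Function.Embedding.nonempty_of_card_le (by simpa using hcard)
    refine Finset.mem_image.2 ⟨fun i => ((Function.invFun g i : S) : V), Finset.mem_univ _, ?_⟩
    ext w
    simp only [Finset.mem_image, Finset.mem_univ, true_and]
    refine ⟨?_, fun hw => ⟨g ⟨w, hw⟩, by rw [Function.leftInverse_invFun g.injective]⟩⟩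
    rintro ⟨i, rfl⟩
    exact (Function.invFun g i : S).2
  exact (Finset.card_le_card hsub).trans (Finset.card_image_le.trans (by simp))

theorem measureReal_not_locallySparse_le {a s c t r : ℝ} (ha : 0 < a) (ht : 0 ≤ t) (hr : 0 ≤ r)
    (hrate : r ≤ t * c - p * s * (Real.exp t - 1)) :
    G(V, p).real {G | ¬ LocallySparse G a s c} ≤
      (n ^ ⌊s⌋₊) ^ 2 * Real.exp (-(a * r)) := by
  classical
  let T : Finset (Finset V) := {S | S.Nonempty ∧ #S ≤ ⌊s⌋₊}
  have hsub : {G : SimpleGraph V | ¬ LocallySparse G a s c} ⊆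
      ⋃ P ∈ {P ∈ T ×ˢ T | a ≤ #P.1 ∧ #P.2 ≤ s},
        {G | eIn G ((P.2 : Set V) \ P.1) + c * #P.1 ≤ (eIn G P.2 : ℝ)} := by
    intro G hG
    simp only [LocallySparse, Set.mem_ofPred_eq, not_forall, not_lt] at hG
    obtain ⟨A, S, hAS, hA, hS, hcount⟩ := hG
    have hAne : A.Nonempty := Finset.card_pos.1 (mod_cast ha.trans_le hA)
    have hScard : #S ≤ ⌊s⌋₊ := Nat.le_floor hS
    simp only [T, Set.mem_iUnion, Finset.mem_filter, Finset.mem_product, Finset.mem_univ, true_and]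
    exact ⟨(A, S), ⟨⟨⟨hAne, (Finset.card_le_card hAS).trans hScard⟩, hAne.mono hAS, hScard⟩,
      hA, hS⟩, hcount⟩
  refine (measureReal_mono hsub (measure_ne_top _ _)).trans
    ((measureReal_biUnion_finset_le _ _).trans ?_)
  calc _ ≤ ∑ P ∈ T ×ˢ T with a ≤ #P.1 ∧ #P.2 ≤ s, Real.exp (-(a * r)) :=
        Finset.sum_le_sum fun P hP =>
          have hP' := (Finset.mem_filter.1 hP).2
          measureReal_eIn_sdiff_add_le_eIn_le hP'.1 hP'.2 ht hr hrate
    _ ≤ (n ^ ⌊s⌋₊) ^ 2 * Real.exp (-(a * r)) := by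
        rw [Finset.sum_const, nsmul_eq_mul]
        gcongr
        have hT := card_nonempty_card_le_le (V := V) ⌊s⌋₊
        calc _ ≤ ((#(T ×ˢ T) : ℕ) : ℝ) := mod_cast Finset.card_filter_le _ _
          _ ≤ _ := by
            rw [Finset.card_product, ← sq]
            exact_mod_cast Nat.pow_le_pow_left hT 2

end UnionBound

section IsolatedVertices

variable {V : Type*} {p : I}

theorem measureReal_disjoint_edgeSet [Finite V] {F : Finset (Sym2 V)} (hF : ∀ e ∈ F, ¬ e.IsDiag) :
    G(V, p).real {G | Disjoint G.edgeSet F} = (1 - p) ^ #F := by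
  classical
  have hprod (G : SimpleGraph V) : ∏ e ∈ F, (if e ∈ G.edgeSet then (0 : ℝ) else 1) =
      {G : SimpleGraph V | Disjoint G.edgeSet F}.indicator 1 G := by
    by_cases hG : Disjoint G.edgeSet F
    · rw [Set.indicator_of_mem hG]
      exact Finset.prod_eq_one fun e he => if_neg (Set.disjoint_right.1 hG he)
    · rw [Set.indicator_of_notMem hG]
      obtain ⟨e, he, heF⟩ := Set.not_disjoint_iff.1 hG
      exact Finset.prod_eq_zero heF (if_pos he)
  rw [← integral_indicator_one .of_discrete]
  simp only [← hprod]
  rw [integral_prod_edgeSet_binomialRandom hF]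
  ring

variable [Fintype V]

theorem measureReal_isIsolated (v : V) :
    G(V, p).real {G | G.IsIsolated v} = (1 - p) ^ (Fintype.card V - 1) := by
  classical
  simp only [isIsolated_iff_disjoint_edgeSet]
  rw [measureReal_disjoint_edgeSet fun _ => not_isDiag_of_mem_pairsAt, card_pairsAt]

theorem measureReal_isIsolated_inter_mul {v w : V} (h : v ≠ w) :
    G(V, p).real ({G | G.IsIsolated v} ∩ {G | G.IsIsolated w}) * (1 - p) =
      ((1 - p) ^ (Fintype.card V - 1)) ^ 2 := by
  classical
  have hinter : {G : SimpleGraph V | G.IsIsolated v} ∩ {G | G.IsIsolated w} =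
      {G | Disjoint G.edgeSet ((pairsAt v ∪ pairsAt w : Finset (Sym2 V)) : Set (Sym2 V))} := by
    ext G
    simp only [Set.mem_inter_iff, Set.mem_ofPred_eq, isIsolated_iff_disjoint_edgeSet,
      Finset.coe_union, Set.disjoint_union_right]
  have hcard : #(pairsAt v ∪ pairsAt w) + 1 = (Fintype.card V - 1) * 2 := by
    have := Finset.card_union_add_card_inter (pairsAt v) (pairsAt w)
    rwa [pairsAt_inter_pairsAt h, Finset.card_singleton, card_pairsAt, card_pairsAt,
      ← mul_two] at this
  rw [hinter, measureReal_disjoint_edgeSet fun e he => ?_, ← pow_succ, hcard, pow_mul]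
  exact (Finset.mem_union.1 he).elim not_isDiag_of_mem_pairsAt not_isDiag_of_mem_pairsAt

theorem measureReal_forall_not_isIsolated_le [Nonempty V] (hp : (p : ℝ) < 1) :
    G(V, p).real {G | ∀ v, ¬ G.IsIsolated v} ≤
      1 / (Fintype.card V * (1 - p) ^ (Fintype.card V - 1)) + p / (1 - p) := by
  have hp' : (0 : ℝ) < 1 - p := sub_pos.2 hp
  have hinter : {G : SimpleGraph V | ∀ v, ¬ G.IsIsolated v} = ⋂ v, {G | G.IsIsolated v}ᶜ := by
    ext G; simp
  rw [hinter]
  refine measureReal_iInter_compl_le_of_pairwise (fun _ => .of_discrete) (pow_pos hp' _)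
    (div_nonneg p.2.1 hp'.le) measureReal_isIsolated fun v w hvw => le_of_eq ?_
  rw [← measureReal_isIsolated_inter_mul hvw]
  field_simp
  ring

end IsolatedVertices

end BinomialRandomGraph

section Asymptotics

open MeasureTheory ProbabilityTheory unitInterval
open scoped SimpleGraph

theorem exp_neg_two_mul_le_one_sub {x : ℝ} (hx : 0 ≤ x) (hx' : x ≤ 1 / 2) :
    Real.exp (-(2 * x)) ≤ 1 - x := by
  rw [Real.exp_neg, inv_le_comm₀ (Real.exp_pos _) (by linarith)]
  calc (1 - x)⁻¹ ≤ 2 * x + 1 := by rw [inv_le_iff_one_le_mul₀ (by linarith)]; nlinarith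
    _ ≤ Real.exp (2 * x) := Real.add_one_le_exp _

theorem measureReal_not_forcesSullivan_le_of_sparse {n : ℕ} (hn : 1 ≤ n) {p : I}
    (hp : (p : ℝ) ≤ 1 / 2) (hpn : (p : ℝ) * n ≤ Real.log n / 4) :
    G(Fin n, p).real {G | ¬ ForcesSullivan G} ≤
      Real.exp (-(Real.log n / 2)) + Real.log n / n := by
  have : Nonempty (Fin n) := Fin.pos_iff_nonempty.1 hn
  have hn0 : (0 : ℝ) < n := Nat.cast_pos.2 hn
  have hpow : Real.exp (-(Real.log n / 2)) ≤ (1 - p : ℝ) ^ (n - 1) :=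
    calc Real.exp (-(Real.log n / 2)) ≤ Real.exp (n * -(2 * p)) :=
          Real.exp_le_exp.2 (by linarith)
      _ = Real.exp (-(2 * p)) ^ n := Real.exp_nat_mul _ n
      _ ≤ (1 - p : ℝ) ^ n := by gcongr; exact exp_neg_two_mul_le_one_sub p.2.1 hp
      _ ≤ (1 - p : ℝ) ^ (n - 1) :=
          pow_le_pow_of_le_one (by linarith) (by linarith [p.2.1]) (Nat.sub_le n 1)
  have hfirst : 1 / (n * (1 - p : ℝ) ^ (n - 1)) ≤ Real.exp (-(Real.log n / 2)) :=
    calc 1 / (n * (1 - p : ℝ) ^ (n - 1)) ≤ 1 / (n * Real.exp (-(Real.log n / 2))) := by gcongr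
      _ = 1 / Real.exp (Real.log n + -(Real.log n / 2)) := by
          rw [Real.exp_add, Real.exp_log hn0]
      _ = Real.exp (-(Real.log n / 2)) := by
          rw [one_div, ← Real.exp_neg]
          ring_nf
  have hsecond : (p : ℝ) / (1 - p) ≤ Real.log n / n := by
    rw [div_le_div_iff₀ (by linarith) hn0]
    nlinarith [Real.log_natCast_nonneg n]
  calc G(Fin n, p).real {G | ¬ ForcesSullivan G}
      ≤ G(Fin n, p).real {G | ∀ v, ¬ G.IsIsolated v} :=
        measureReal_mono fun G hG v hv => hG fun D h => ⟨v, h.sullivanVertex_of_isIsolated hv⟩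
    _ ≤ 1 / (n * (1 - p : ℝ) ^ (n - 1)) + p / (1 - p) := by
        simpa using measureReal_forall_not_isIsolated_le (V := Fin n) (p := p) (by linarith)
    _ ≤ Real.exp (-(Real.log n / 2)) + Real.log n / n := add_le_add hfirst hsecond

theorem measureReal_not_edgeRegular_le_exp {n : ℕ} {p : I} {η : ℝ} (hη : 0 ≤ η) (hη' : η ≤ 1)
    (h : 4 ≤ η ^ 2 * (p * n)) :
    G(Fin n, p).real {G | ¬ EdgeRegular G p η} ≤ 2 * Real.exp (-n) :=
  calc G(Fin n, p).real {G | ¬ EdgeRegular G p η}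
      ≤ 2 ^ n * (2 * Real.exp (-(η ^ 2 * (p * n ^ 2 / 2)))) := by
        simpa using measureReal_not_edgeRegular_le (V := Fin n) (p := p) hη hη'
    _ ≤ Real.exp 1 ^ n * (2 * Real.exp (-(2 * n))) := by
        gcongr ?_ ^ _ * (2 * Real.exp (-?_))
        · linarith [Real.add_one_le_exp 1]
        · linarith [mul_le_mul_of_nonneg_right h (Nat.cast_nonneg (α := ℝ) n)]
    _ = 2 * Real.exp (-n) := by
        rw [← Real.exp_nat_mul, mul_left_comm, ← Real.exp_add]
        ring_nf

theorem measureReal_not_locallySparse_le_inv {n : ℕ} {p : I} {δ t ρ : ℝ} (hδ : 0 < δ)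
    (hδ' : δ ≤ 1 / 10) (ht : 0 ≤ t) (hρ : 0 ≤ ρ)
    (hrate : ρ ≤ t * (p + 2 * δ) - p * (1 + δ) * (Real.exp t - 1)) (hpn : 1 ≤ (p : ℝ) * n)
    (hlog : 5 * Real.log n ≤ δ ^ 2 / 8 * ρ * (p * n)) :
    G(Fin n, p).real {G | ¬ LocallySparse G (δ ^ 2 / 8 * (p * n)) ((1 + δ) * (p * n))
      ((p + 2 * δ) * (p * n))} ≤ (n : ℝ)⁻¹ := by
  have hn0 : (0 : ℝ) < n := by
    by_contra! h
    nlinarith [p.2.1]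
  set m : ℝ := p * n
  set k := ⌊(1 + δ) * m⌋₊
  have hk : (k : ℝ) ≤ 2 * m := (Nat.floor_le (by positivity)).trans (by nlinarith)
  have hlog0 : 0 ≤ Real.log n := Real.log_natCast_nonneg n
  have hbound := measureReal_not_locallySparse_le (V := Fin n) (p := p) (a := δ ^ 2 / 8 * m)
    (s := (1 + δ) * m) (c := (p + 2 * δ) * m) (r := m * ρ) (by positivity) ht (by positivity)
    (by linarith [mul_le_mul_of_nonneg_left hrate (zero_le_one.trans hpn)])
  rw [Fintype.card_fin] at hbound
  calc _ ≤ ((n : ℝ) ^ k) ^ 2 * Real.exp (-(δ ^ 2 / 8 * m * (m * ρ))) := hbound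
    _ = Real.exp (2 * k * Real.log n - δ ^ 2 / 8 * ρ * m * m) := by
        rw [← pow_mul, ← Real.exp_log hn0, ← Real.exp_nat_mul, ← Real.exp_add, Real.log_exp]
        push_cast
        ring_nf
    _ ≤ Real.exp (-Real.log n) := by
        refine Real.exp_le_exp.2 ?_
        nlinarith [mul_le_mul_of_nonneg_right hlog (zero_le_one.trans hpn),
          mul_le_mul_of_nonneg_right hk hlog0, mul_le_mul_of_nonneg_right hpn hlog0]
    _ = (n : ℝ)⁻¹ := by rw [Real.exp_neg, Real.exp_log hn0]

theorem le_rate_of_le_exp_neg {p δ t : ℝ} (hp : 0 ≤ p) (hδ : 0 ≤ δ) (hδ' : δ ≤ 1) (ht : 0 ≤ t)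
    (hpt : p ≤ Real.exp (-t)) :
    2 * δ * t - 2 ≤ t * (p + 2 * δ) - p * (1 + δ) * (Real.exp t - 1) := by
  have hexp : p * Real.exp t ≤ 1 := by
    rwa [Real.exp_neg, ← one_div, le_div_iff₀ (Real.exp_pos t)] at hpt
  nlinarith [mul_nonneg ht hp]

theorem le_rate_of_le_half {p δ : ℝ} (hp : 0 ≤ p) (hp' : p ≤ 1 / 2) (hδ : 0 ≤ δ) (hδ' : δ ≤ 1) :
    δ ^ 2 / 2 ≤ δ * (p + 2 * δ) - p * (1 + δ) * (Real.exp δ - 1) := by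
  have hexp : Real.exp δ - 1 ≤ δ + δ ^ 2 := by
    linarith [(abs_le.1 (Real.abs_exp_sub_one_sub_id_le (abs_le.2 ⟨by linarith, hδ'⟩))).2]
  have hmul : p * (1 + δ) * (Real.exp δ - 1) ≤ p * (1 + δ) * (δ + δ ^ 2) := by gcongr
  nlinarith [mul_nonneg hp (sq_nonneg δ), mul_le_mul_of_nonneg_right hp' (sq_nonneg δ),
    mul_le_mul_of_nonneg_left hδ' (mul_nonneg hp (sq_nonneg δ))]

/- For `p` bounded away from `0`, the exponential moment at `t = δ` suffices, since `p * n` is then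
linear in `n`. For smaller `p`, where `p * n` may be as small as `log n / 4`, a large constant `t`
is needed. -/
theorem eventually_measureReal_not_locallySparse_le {δ : ℝ} (hδ : 0 < δ) (hδ' : δ ≤ 1 / 10) :
    ∀ᶠ n : ℕ in atTop, ∀ p : I, (p : ℝ) ≤ 1 / 2 → Real.log n / 4 ≤ p * n →
      G(Fin n, p).real {G | ¬ LocallySparse G (δ ^ 2 / 8 * (p * n)) ((1 + δ) * (p * n))
        ((p + 2 * δ) * (p * n))} ≤ (n : ℝ)⁻¹ := by
  set t := (1 + 80 / δ ^ 2) / δ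
  have ht : 2 * δ * t - 2 = 160 / δ ^ 2 := by simp only [t]; field_simp; ring
  have hlogn : Tendsto (fun n : ℕ => Real.log n) atTop atTop :=
    Real.tendsto_log_atTop.comp tendsto_natCast_atTop_atTop
  have hlog_small : ∀ᶠ n : ℕ in atTop,
      Real.log n ≤ δ ^ 4 / 80 * Real.exp (-t) * n := by
    have := (Real.isLittleO_log_id_atTop.comp_tendsto
      (tendsto_natCast_atTop_atTop (R := ℝ))).bound
        (show 0 < δ ^ 4 / 80 * Real.exp (-t) by positivity)
    filter_upwards [this] with n hn
    simpa using (le_abs_self _).trans hn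
  filter_upwards [hlogn.eventually_ge_atTop 4, hlog_small] with n hlog4 hlog p hp hpn
  rcases le_total (p : ℝ) (Real.exp (-t)) with hpt | hpt
  · refine measureReal_not_locallySparse_le_inv hδ hδ' (by positivity) (by rw [ht]; positivity)
      (le_rate_of_le_exp_neg p.2.1 hδ.le (by linarith) (by positivity) hpt) (by linarith) ?_
    calc 5 * Real.log n ≤ 20 * (p * n) := by linarith
      _ = δ ^ 2 / 8 * (2 * δ * t - 2) * (p * n) := by rw [ht]; field_simp; ring
  · refine measureReal_not_locallySparse_le_inv hδ hδ' hδ.le (by positivity)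
      (le_rate_of_le_half p.2.1 hp hδ.le (by linarith)) (by linarith) ?_
    calc 5 * Real.log n ≤ 5 * (δ ^ 4 / 80 * Real.exp (-t) * n) := by gcongr
      _ = δ ^ 2 / 8 * (δ ^ 2 / 2) * (Real.exp (-t) * n) := by ring
      _ ≤ δ ^ 2 / 8 * (δ ^ 2 / 2) * (p * n) := by gcongr

theorem eventually_measureReal_not_forcesSullivan_le_of_dense {δ : ℝ} (hδ : 0 < δ)
    (hδ' : δ ≤ 1 / 10) :
    ∀ᶠ n : ℕ in atTop, ∀ p : I, (p : ℝ) ≤ 1 / 2 - 4 * δ → Real.log n / 4 ≤ p * n →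
      G(Fin n, p).real {G | ¬ ForcesSullivan G} ≤ 2 * Real.exp (-n) + (n : ℝ)⁻¹ := by
  have hnat : Tendsto (fun n : ℕ => (n : ℝ)) atTop atTop := tendsto_natCast_atTop_atTop
  have hδ4 : 0 < δ ^ 4 := by positivity
  filter_upwards [eventually_measureReal_not_locallySparse_le hδ hδ',
    (hnat.const_mul_atTop hδ4).eventually_ge_atTop 1,
    ((Real.tendsto_log_atTop.comp hnat).const_mul_atTop (pow_pos hδ4 2)).eventually_ge_atTop 16]
    with n hsparse hn hlog p hp hpn
  simp only [Function.comp_apply] at hlog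
  have hdense : 4 ≤ (δ ^ 4) ^ 2 * (p * n) := by
    linarith [mul_le_mul_of_nonneg_left hpn (sq_nonneg (δ ^ 4))]
  have hp0 : 0 < (p : ℝ) := by
    refine p.2.1.lt_of_ne' fun h => ?_
    norm_num [h] at hdense
  calc G(Fin n, p).real {G | ¬ ForcesSullivan G}
      ≤ G(Fin n, p).real ({G | ¬ EdgeRegular G p (δ ^ 4)} ∪ {G | ¬ LocallySparse G
          (δ ^ 2 / 8 * (p * n)) ((1 + δ) * (p * n)) ((p + 2 * δ) * (p * n))}) := by
        refine measureReal_mono fun G hG => ?_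
        by_contra! hgood
        simp only [Set.mem_union, Set.mem_ofPred_eq, not_or, not_not] at hgood
        exact hG (hgood.1.forcesSullivan (by simpa using hgood.2) hp0 hp hδ hδ' (by simpa using hn))
    _ ≤ 2 * Real.exp (-n) + (n : ℝ)⁻¹ := (measureReal_union_le _ _).trans <| add_le_add
        (measureReal_not_edgeRegular_le_exp hδ4.le (pow_le_one₀ hδ.le (by linarith)) hdense)
        (hsparse p (by linarith) hpn)

theorem eventually_measureReal_not_forcesSullivan_le {b ε : ℝ} (hb : b < 1 / 2) (hε : 0 < ε) :
    ∀ᶠ n : ℕ in atTop, ∀ p : I, (p : ℝ) ≤ b → G(Fin n, p).real {G | ¬ ForcesSullivan G} ≤ ε := by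
  obtain ⟨δ, hδ, hδ', hbδ⟩ : ∃ δ : ℝ, 0 < δ ∧ δ ≤ 1 / 10 ∧ b ≤ 1 / 2 - 4 * δ :=
    ⟨min (1 / 10) ((1 / 2 - b) / 4), lt_min (by norm_num) (by linarith), min_le_left _ _,
      by linarith [min_le_right (1 / 10 : ℝ) ((1 / 2 - b) / 4)]⟩
  have hnat : Tendsto (fun n : ℕ => (n : ℝ)) atTop atTop := tendsto_natCast_atTop_atTop
  have hsparse : Tendsto (fun n : ℕ => Real.exp (-(Real.log n / 2)) + Real.log n / n)
      atTop (nhds 0) := by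
    simpa using (Real.tendsto_exp_neg_atTop_nhds_zero.comp
      ((Real.tendsto_log_atTop.comp hnat).atTop_div_const two_pos)).add
        (Real.isLittleO_log_id_atTop.tendsto_div_nhds_zero.comp hnat)
  have hdense : Tendsto (fun n : ℕ => 2 * Real.exp (-(n : ℝ)) + (n : ℝ)⁻¹) atTop (nhds 0) := by
    simpa using ((Real.tendsto_exp_neg_atTop_nhds_zero.comp hnat).const_mul 2).add
      (tendsto_inv_atTop_zero.comp hnat)
  filter_upwards [hsparse.eventually_le_const hε, hdense.eventually_le_const hε,
    eventually_measureReal_not_forcesSullivan_le_of_dense hδ hδ', eventually_ge_atTop 1]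
    with n hsparse hdense hgraph hn p hp
  rcases le_total (p * n : ℝ) (Real.log n / 4) with hpn | hpn
  · exact (measureReal_not_forcesSullivan_le_of_sparse hn (by linarith) hpn).trans hsparse
  · exact (hgraph p (by linarith) hpn).trans hdense

end Asymptotics

/-- if `p = p(n) ∈ [0,1]` satisfies `limsup p < 1/2`, then a.a.s. every
orientation of `G(n,p)` contains a Sullivan vertex. -/
theorem stmt_11 (p : ℕ → ℝ) (hp : ∀ n, p n ∈ Set.Icc (0 : ℝ) 1)
    (hlim : limsup p atTop < 1/2) :
    Tendsto (fun n => gnpProb n (p n) (fun G =>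
        ∀ D : Fin n → Fin n → Prop, Orients D G → ∃ v, SullivanVertex D v))
      atTop (nhds 1) := by
  obtain ⟨b, hpb, hb⟩ := exists_between hlim
  have hev : ∀ᶠ n in atTop, p n < b :=
    eventually_lt_of_limsup_lt hpb (isBoundedUnder_of ⟨1, fun n => (hp n).2⟩)
  refine Metric.tendsto_nhds.2 fun ε hε => ?_
  filter_upwards [hev, eventually_measureReal_not_forcesSullivan_le hb (half_pos hε)]
    with n hpn hgraph
  calc dist (gnpProb n (p n) ForcesSullivan) 1
      = _ := dist_gnpProb_one n ⟨p n, hp n⟩ ForcesSullivan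
    _ ≤ ε / 2 := hgraph ⟨p n, hp n⟩ hpn.le
    _ < ε := half_lt_self hε
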